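/- arXiv:2006.14507 — 2 statements merged into one kernel-verified Lean document; each statement's English description precedes it below -/
import Mathlib

section
/- Let Y be a smooth Killing field of Euclidean 3-space and suppose there exists κ ∈ ℝ such that (curl Y) x = κ • Y x for every x (in particular this covers the irrotational case κ = 0 and the Beltrami case κ ≠ 0). Then the gradient of the scalar function q y = ⟪Y y, Y y⟫ vanishes identically, and fderiv ℝ Y x (Y x) = 0 for every x, i.e. all integral curves of Y are straight lines traversed at constant speed. -/
open scoped RealInnerProductSpace

noncomputable section

/-- Euclidean 3-space. -/
abbrev E3 := EuclideanSpace ℝ (Fin 3)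

/-- The standard basis vectors e₁, e₂, e₃ (indexed by 0, 1, 2). -/
def e3 (i : Fin 3) : E3 := EuclideanSpace.single i (1 : ℝ)

/-- Build a point of `E3` from three coordinates. -/
def mk3 (a b c : ℝ) : E3 := (WithLp.equiv 2 (Fin 3 → ℝ)).symm ![a, b, c]

/-- The curl of a vector field:
`(curl X) x = (∂₂X₃ − ∂₃X₂, ∂₃X₁ − ∂₁X₃, ∂₁X₂ − ∂₂X₁)(x)`. -/
def curl3 (X : E3 → E3) (x : E3) : E3 :=
  mk3 (fderiv ℝ X x (e3 1) 2 - fderiv ℝ X x (e3 2) 1)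
      (fderiv ℝ X x (e3 2) 0 - fderiv ℝ X x (e3 0) 2)
      (fderiv ℝ X x (e3 0) 1 - fderiv ℝ X x (e3 1) 0)

/-- The cross product on `E3`. -/
def cross3 (a b : E3) : E3 :=
  mk3 (a 1 * b 2 - a 2 * b 1) (a 2 * b 0 - a 0 * b 2) (a 0 * b 1 - a 1 * b 0)

/-- A vector field is a Killing field iff its derivative is everywhere skew-adjoint. -/
def IsKilling3 (Y : E3 → E3) : Prop :=
  ∀ x v w : E3, ⟪fderiv ℝ Y x v, w⟫ + ⟪v, fderiv ℝ Y x w⟫ = 0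

/-!
In any dimension `∇⟪Y, Y⟫ = 2 (DY)ᵀ Y`, and in dimension three the antisymmetric part of `DY` is
governed by the curl: `(DY - (DY)ᵀ) v = curl Y × v`. Where `curl Y` is parallel to `Y`, the second
identity gives `(DY) Y = (DY)ᵀ Y`; where `DY` is skew-adjoint, `(DY)ᵀ Y = -(DY) Y`. Where both hold,
both vectors vanish, and with them the gradient.
-/

open ContinuousLinearMap (adjoint)
open scoped ComplexConjugate

theorem mem_skewAdjoint_iff_inner {𝕜 E : Type*} [RCLike 𝕜] [NormedAddCommGroup E]
    [InnerProductSpace 𝕜 E] [CompleteSpace E] {A : E →L[𝕜] E} :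
    A ∈ skewAdjoint (E →L[𝕜] E) ↔ ∀ v w, inner 𝕜 (A v) w + inner 𝕜 v (A w) = 0 := by
  rw [skewAdjoint.mem_iff, ContinuousLinearMap.star_eq_adjoint, eq_comm,
    ContinuousLinearMap.eq_adjoint_iff]
  simp only [neg_apply, inner_neg_left, neg_eq_iff_add_eq_zero]

theorem hasGradientAt_inner_self {E F : Type*}
    [NormedAddCommGroup E] [InnerProductSpace ℝ E] [CompleteSpace E]
    [NormedAddCommGroup F] [InnerProductSpace ℝ F] [CompleteSpace F]
    {f : E → F} {f' : E →L[ℝ] F} {x : E} (hf : HasFDerivAt f f' x) :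
    HasGradientAt (fun y => ⟪f y, f y⟫) ((2 : ℝ) • adjoint f' (f x)) x := by
  rw [hasGradientAt_iff_hasFDerivAt]
  refine (hf.inner ℝ hf).congr_fderiv ?_
  ext v
  simp only [ContinuousLinearMap.comp_apply, ContinuousLinearMap.prod_apply, fderivInnerCLM_apply,
    InnerProductSpace.toDual_apply_apply, real_inner_smul_left,
    ContinuousLinearMap.adjoint_inner_left, real_inner_comm (f x)]
  ring

section Coordinates

variable {𝕜 m n : Type*} [RCLike 𝕜] [Fintype m] [DecidableEq m]

theorem clm_apply_eq_sum_single (A : EuclideanSpace 𝕜 m →L[𝕜] EuclideanSpace 𝕜 n)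
    (v : EuclideanSpace 𝕜 m) (i : n) :
    A v i = ∑ j, v j * A (EuclideanSpace.single j 1) i := by
  have hv : ∑ j, v j • EuclideanSpace.single j (1 : 𝕜) = v := by
    simpa using (EuclideanSpace.basisFun m 𝕜).sum_repr v
  conv_lhs => rw [← hv]
  simp

theorem adjoint_apply_eq_sum_single [Fintype n]
    (A : EuclideanSpace 𝕜 m →L[𝕜] EuclideanSpace 𝕜 n) (v : EuclideanSpace 𝕜 n) (i : m) :
    adjoint A v i = ∑ j, v j * conj (A (EuclideanSpace.single i 1) j) :=
  calc adjoint A v i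
    _ = inner 𝕜 (EuclideanSpace.single i 1) (adjoint A v) := by
      rw [EuclideanSpace.inner_single_left, map_one, one_mul]
    _ = inner 𝕜 (A (EuclideanSpace.single i 1)) v := A.adjoint_inner_right _ _
    _ = ∑ j, v j * conj (A (EuclideanSpace.single i 1) j) := by simp [PiLp.inner_apply]

end Coordinates

theorem cross3_smul_self (c : ℝ) (a : E3) : cross3 (c • a) a = 0 := by
  ext i
  fin_cases i <;> simp [cross3, mk3] <;> ring

theorem fderiv_sub_adjoint_apply_eq_cross3_curl3 (X : E3 → E3) (x v : E3) :
    fderiv ℝ X x v - adjoint (fderiv ℝ X x) v = cross3 (curl3 X x) v := by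
  ext i
  rw [PiLp.sub_apply, clm_apply_eq_sum_single, adjoint_apply_eq_sum_single]
  fin_cases i <;> simp [cross3, curl3, mk3, e3, Fin.sum_univ_three] <;> ring

theorem killing_proportional_curl_geodesic_general {Y : E3 → E3} {x : E3} {κ : ℝ}
    (hY : DifferentiableAt ℝ Y x) (hskew : fderiv ℝ Y x ∈ skewAdjoint (E3 →L[ℝ] E3))
    (hκ : curl3 Y x = κ • Y x) :
    gradient (fun y => ⟪Y y, Y y⟫) x = 0 ∧ fderiv ℝ Y x (Y x) = 0 := by
  have hneg : adjoint (fderiv ℝ Y x) (Y x) = -fderiv ℝ Y x (Y x) :=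
    DFunLike.congr_fun (skewAdjoint.mem_iff.mp hskew) (Y x)
  have hsymm : fderiv ℝ Y x (Y x) = adjoint (fderiv ℝ Y x) (Y x) := by
    rw [← sub_eq_zero, fderiv_sub_adjoint_apply_eq_cross3_curl3, hκ, cross3_smul_self]
  have : IsAddTorsionFree E3 := .of_isTorsionFree ℝ E3
  have hzero : fderiv ℝ Y x (Y x) = 0 := self_eq_neg.mp (hsymm.trans hneg)
  refine ⟨?_, hzero⟩
  rw [(hasGradientAt_inner_self hY.hasFDerivAt).gradient, ← hsymm, hzero, smul_zero]

/-- If a smooth Killing field `Y` of Euclidean 3-space satisfies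
`curl Y = κ • Y` for some `κ ∈ ℝ` (covering the irrotational and Beltrami cases),
then `grad ⟪Y, Y⟫` vanishes identically and `fderiv ℝ Y x (Y x) = 0` everywhere,
i.e. all integral curves of `Y` are straight lines traversed at constant speed. -/
theorem killing_proportional_curl_geodesic (Y : E3 → E3)
    (hY : ContDiff ℝ (⊤ : ℕ∞) Y) (hK : IsKilling3 Y)
    (κ : ℝ) (hκ : ∀ x : E3, curl3 Y x = κ • Y x) :
    (∀ x : E3, gradient (fun y => ⟪Y y, Y y⟫) x = 0) ∧
    (∀ x : E3, fderiv ℝ Y x (Y x) = 0) := by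
  have pointwise (x : E3) := killing_proportional_curl_geodesic_general
    (hY.differentiable (by simp) x) (mem_skewAdjoint_iff_inner.mpr (hK x)) (hκ x)
  exact ⟨fun x => (pointwise x).1, fun x => (pointwise x).2⟩
end
end

section
/- Let Y be a smooth Killing field of Euclidean 3-space, let λ ∈ ℝ, and let X be a smooth vector field with (curl X) x = λ • X x for all x and [Y, X] x = 0 for all x. Then for every x one has grad h x = λ • ((Y x) × (X x)), where h is the scalar function h y = ⟪X y, Y y⟫. -/
open scoped RealInnerProductSpace

noncomputable section

/-!
Writing `DXᵀ` for the adjoint of the derivative, `grad ⟪X, Y⟫ = DXᵀ Y + DYᵀ X`. The Killing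
condition says `DYᵀ = -DY`, and the antisymmetric part of `DX` is the curl:
`DXᵀ v = DX v + v × curl X`. Hence
`grad ⟪X, Y⟫ = DX Y - DY X + Y × curl X = [Y, X] + Y × curl X`. This is Cartan's formula
`L_Y X♭ = d (i_Y X♭) + i_Y (d X♭)`, with `L_Y X♭ = [Y, X]♭` because `Y` preserves the metric.
-/

open ContinuousLinearMap VectorField
open scoped Matrix

section InnerProductSpace

variable {F G : Type*} [NormedAddCommGroup F] [InnerProductSpace ℝ F] [CompleteSpace F]
  [NormedAddCommGroup G] [InnerProductSpace ℝ G] [CompleteSpace G]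

lemma hasGradientAt_inner {f g : F → G} {f' g' : F →L[ℝ] G} {x : F}
    (hf : HasFDerivAt f f' x) (hg : HasFDerivAt g g' x) :
    HasGradientAt (fun y => ⟪f y, g y⟫) (adjoint f' (g x) + adjoint g' (f x)) x := by
  rw [hasGradientAt_iff_hasFDerivAt]
  refine (hf.inner ℝ hg).congr_fderiv (ContinuousLinearMap.ext fun v => ?_)
  simp only [comp_apply, prod_apply, fderivInnerCLM_apply, InnerProductSpace.toDual_apply_apply,
    inner_add_left, adjoint_inner_left]
  rw [add_comm, real_inner_comm (g x)]

lemma hasGradientAt_inner_of_adjoint_fderiv_eq_neg {X Y : F → F} {x : F}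
    (hX : DifferentiableAt ℝ X x) (hY : DifferentiableAt ℝ Y x)
    (hskew : adjoint (fderiv ℝ Y x) = -fderiv ℝ Y x) :
    HasGradientAt (fun y => ⟪X y, Y y⟫)
      (adjoint (fderiv ℝ X x) (Y x) - fderiv ℝ Y x (X x)) x := by
  simpa only [hskew, neg_apply, ← sub_eq_add_neg] using
    hasGradientAt_inner hX.hasFDerivAt hY.hasFDerivAt

end InnerProductSpace

section RCLike

variable {𝕜 : Type*} [RCLike 𝕜]

lemma adjoint_eq_neg_iff_inner_add_inner_eq_zero {F : Type*} [NormedAddCommGroup F]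
    [InnerProductSpace 𝕜 F] [CompleteSpace F] {A : F →L[𝕜] F} :
    adjoint A = -A ↔ ∀ v w, inner 𝕜 (A v) w + inner 𝕜 v (A w) = 0 := by
  rw [eq_comm, eq_adjoint_iff]
  simp only [neg_apply, inner_neg_left, neg_eq_iff_add_eq_zero]

variable {ι : Type*} [Fintype ι] [DecidableEq ι]

lemma map_euclideanSpace_eq_sum {M L : Type*} [AddCommMonoid M] [Module 𝕜 M]
    [FunLike L (EuclideanSpace 𝕜 ι) M] [LinearMapClass L 𝕜 (EuclideanSpace 𝕜 ι) M]
    (A : L) (v : EuclideanSpace 𝕜 ι) :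
    A v = ∑ i, v i • A (EuclideanSpace.single i 1) := by
  conv_lhs => rw [← (EuclideanSpace.basisFun ι 𝕜).sum_repr v]
  simp only [map_sum, map_smul, EuclideanSpace.basisFun_repr, EuclideanSpace.basisFun_apply]

lemma adjoint_euclideanSpace_apply {F : Type*} [NormedAddCommGroup F] [InnerProductSpace 𝕜 F]
    [CompleteSpace F] (A : EuclideanSpace 𝕜 ι →L[𝕜] F) (w : F) (i : ι) :
    adjoint A w i = inner 𝕜 (A (EuclideanSpace.single i 1)) w := by
  rw [← adjoint_inner_right, EuclideanSpace.inner_single_left, map_one, one_mul]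

end RCLike

lemma cross3_eq_toLp_crossProduct (a b : E3) : cross3 a b = WithLp.toLp 2 (a.ofLp ⨯₃ b.ofLp) := rfl

lemma cross3_smul_right (a : E3) (c : ℝ) (b : E3) : cross3 a (c • b) = c • cross3 a b := by
  simp only [cross3_eq_toLp_crossProduct, WithLp.ofLp_smul, map_smul, WithLp.toLp_smul]

lemma adjoint_fderiv_apply_eq_add_cross3_curl3 (X : E3 → E3) (x v : E3) :
    adjoint (fderiv ℝ X x) v = fderiv ℝ X x v + cross3 v (curl3 X x) := by
  ext i
  rw [PiLp.add_apply, adjoint_euclideanSpace_apply, map_euclideanSpace_eq_sum (fderiv ℝ X x) v]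
  fin_cases i <;>
    simp only [Fin.zero_eta, Fin.mk_one, Fin.reduceFinMk, cross3, curl3, mk3, e3,
      PiLp.inner_apply, PiLp.add_apply, PiLp.smul_apply, smul_eq_mul, Fin.sum_univ_three,
      RCLike.inner_apply, Real.ringHom_apply, WithLp.equiv_symm_apply, Matrix.cons_val] <;>
    ring

lemma hasGradientAt_inner_lieBracket_add_cross3_curl3 {X Y : E3 → E3} {x : E3}
    (hX : DifferentiableAt ℝ X x) (hY : DifferentiableAt ℝ Y x)
    (hskew : adjoint (fderiv ℝ Y x) = -fderiv ℝ Y x) :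
    HasGradientAt (fun y => ⟪X y, Y y⟫) (lieBracket ℝ Y X x + cross3 (Y x) (curl3 X x)) x := by
  convert hasGradientAt_inner_of_adjoint_fderiv_eq_neg hX hY hskew using 1
  rw [adjoint_fderiv_apply_eq_add_cross3_curl3, lieBracket, add_sub_right_comm]

theorem grad_inner_eq_smul_cross_general {X Y : E3 → E3} {lam : ℝ} {x : E3}
    (hX : DifferentiableAt ℝ X x) (hY : DifferentiableAt ℝ Y x)
    (hskew : adjoint (fderiv ℝ Y x) = -fderiv ℝ Y x)
    (hcurl : curl3 X x = lam • X x) (hcomm : lieBracket ℝ Y X x = 0) :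
    HasGradientAt (fun y => ⟪X y, Y y⟫) (lam • cross3 (Y x) (X x)) x := by
  simpa only [hcomm, zero_add, hcurl, cross3_smul_right] using
    hasGradientAt_inner_lieBracket_add_cross3_curl3 hX hY hskew

/-- If `Y` is a smooth Killing field of Euclidean 3-space and `X` is a
smooth vector field with `curl X = λ • X` and `[Y, X] ≡ 0`, then with `h y = ⟪X y, Y y⟫`
one has `grad h x = λ • ((Y x) × (X x))` for every `x`. -/
theorem grad_inner_eq_smul_cross (Y : E3 → E3) (lam : ℝ) (X : E3 → E3)
    (hY : ContDiff ℝ (⊤ : ℕ∞) Y) (hX : ContDiff ℝ (⊤ : ℕ∞) X) (hK : IsKilling3 Y)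
    (hBel : ∀ x : E3, curl3 X x = lam • X x)
    (hcomm : ∀ x : E3, fderiv ℝ X x (Y x) - fderiv ℝ Y x (X x) = 0) :
    ∀ x : E3, gradient (fun y => ⟪X y, Y y⟫) x = lam • cross3 (Y x) (X x) := fun x =>
  (grad_inner_eq_smul_cross_general (hX.differentiable (by simp) x) (hY.differentiable (by simp) x)
    (adjoint_eq_neg_iff_inner_add_inner_eq_zero.mpr (hK x)) (hBel x) (hcomm x)).gradient
end
end
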